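/- Let ℓ = exp, ν ∈ (0,1], suppose γ := max_{‖λ‖₁=1} min_i (−(Aλ)_i) satisfies γ ∈ (0,1), and let {λ_t} be boosting iterates with AdaBoost steps α_t = α_ada_t := (ν/2)·ln((1+γ_t)/(1−γ_t)). Let θ ≥ 0 with θ < γ/(1+γ). Then for every t ≥ 1 (with λ_t ≠ 0): (1/m)·Σ_{i=1}^m 1[(−(Aλ_t)_i)/‖λ_t‖₁ < θ] ≤ exp(−t·ν·(γ² − θγ(2+γ))/2). In particular, if θ < γ/(2+γ) and t > 2·ln(m)/(ν·(γ² − θγ(2+γ))), then M(Aλ_t) := min_{k∈[m]} (−(Aλ_t)_k)/‖λ_t‖₁ ≥ θ. -/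

import Mathlib

open Real Finset

noncomputable section

/-- The property that `C` is a valid curvature constant at level `z`:
`C ≥ 1` and `C⁻¹ ≤ eˣ / ℓ⁽ⁱ⁾(x) ≤ C` for all `x ≤ z` and `i ∈ {0,1,2}`. -/
def CBound (ℓ : ℝ → ℝ) (z C : ℝ) : Prop :=
  1 ≤ C ∧ ∀ x ≤ z, ∀ i ≤ 2,
    C⁻¹ ≤ Real.exp x / iteratedDeriv i ℓ x ∧ Real.exp x / iteratedDeriv i ℓ x ≤ C

/-- `C_ℓ(z)`: the least valid curvature constant at level `z`. -/
def Cconst (ℓ : ℝ → ℝ) (z : ℝ) : ℝ := sInf {C : ℝ | CBound ℓ z C}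

/-- Membership in the class `𝕃`: positive, twice continuously differentiable,
strictly convex, and `C_ℓ(z) < ∞` (i.e. some valid constant exists) for every `z`. -/
def MemL (ℓ : ℝ → ℝ) : Prop :=
  (∀ x, 0 < ℓ x) ∧ ContDiff ℝ 2 ℓ ∧ StrictConvexOn ℝ Set.univ ℓ ∧
    ∀ z : ℝ, ∃ C : ℝ, CBound ℓ z C

/-- Membership in `𝕃_∞`: in `𝕃` and moreover `C_ℓ(z) → 1` as `z → −∞`. -/
def MemLinf (ℓ : ℝ → ℝ) : Prop :=
  MemL ℓ ∧ Filter.Tendsto (Cconst ℓ) Filter.atBot (nhds 1)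

variable {m n : ℕ}

/-- The empirical risk `L(Aλ) = (1/m) Σᵢ ℓ((Aλ)ᵢ)`. -/
def LL (ℓ : ℝ → ℝ) (A : Matrix (Fin m) (Fin n) ℝ) (lam : Fin n → ℝ) : ℝ :=
  (∑ i, ℓ (A.mulVec lam i)) / m

/-- The gradient vector `∇L(Aλ)`, with `i`-th entry `ℓ'((Aλ)ᵢ)/m`. -/
def gradL (ℓ : ℝ → ℝ) (A : Matrix (Fin m) (Fin n) ℝ) (lam : Fin n → ℝ) : Fin m → ℝ :=
  fun i => deriv ℓ (A.mulVec lam i) / m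

/-- `‖Aᵀ ∇L(Aλ)‖_∞`. -/
def gInf (ℓ : ℝ → ℝ) (A : Matrix (Fin m) (Fin n) ℝ) (lam : Fin n → ℝ) : ℝ :=
  ⨆ j : Fin n, |∑ i, gradL ℓ A lam i * A i j|

/-- `‖∇L(Aλ)‖₁`. -/
def gOne (ℓ : ℝ → ℝ) (A : Matrix (Fin m) (Fin n) ℝ) (lam : Fin n → ℝ) : ℝ :=
  ∑ i, |gradL ℓ A lam i|

/-- `γ̂ = ‖Aᵀ∇L(Aλ)‖_∞ / ‖∇L(Aλ)‖₁`. -/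
def gammaHat (ℓ : ℝ → ℝ) (A : Matrix (Fin m) (Fin n) ℝ) (lam : Fin n → ℝ) : ℝ :=
  gInf ℓ A lam / gOne ℓ A lam

/-- `C = C_ℓ(ℓ⁻¹(m · L(Aλ)))`. -/
def Cstep (ℓ : ℝ → ℝ) (A : Matrix (Fin m) (Fin n) ℝ) (lam : Fin n → ℝ) : ℝ :=
  Cconst ℓ (Function.invFun ℓ ((m : ℝ) * LL ℓ A lam))

/-- The (minimum `l¹`) margin `M(Aλ) = min_k (−(Aλ)_k) / ‖λ‖₁`. -/
def margin (A : Matrix (Fin m) (Fin n) ℝ) (lam : Fin n → ℝ) : ℝ :=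
  ⨅ k : Fin m, (-(A.mulVec lam k)) / (∑ j, |lam j|)

/-- The maximum margin `γ = max_{‖λ‖₁=1} min_i (−(Aλ)ᵢ)`. -/
def gammaMax (A : Matrix (Fin m) (Fin n) ℝ) : ℝ :=
  sSup {r : ℝ | ∃ lam : Fin n → ℝ, (∑ j, |lam j|) = 1 ∧ r = ⨅ i : Fin m, -(A.mulVec lam i)}

/-- Boosting iterates: `λ₀ = 0`, `λ_t = λ_{t-1} + α_t • v_t` where `v_t` is a signed
standard basis vector satisfying `∇L(Aλ_{t-1})ᵀ A v_t = −‖Aᵀ∇L(Aλ_{t-1})‖_∞`. -/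
def IsBoostSeq (ℓ : ℝ → ℝ) (A : Matrix (Fin m) (Fin n) ℝ)
    (lam : ℕ → Fin n → ℝ) (α : ℕ → ℝ) (v : ℕ → Fin n → ℝ) : Prop :=
  lam 0 = 0 ∧
  (∀ t : ℕ, 1 ≤ t → lam t = lam (t-1) + α t • v t) ∧
  (∀ t : ℕ, 1 ≤ t → ∃ s : ℝ, (s = 1 ∨ s = -1) ∧ ∃ j : Fin n, v t = s • (Pi.single j (1:ℝ) : Fin n → ℝ)) ∧
  (∀ t : ℕ, 1 ≤ t →
    ∑ i, gradL ℓ A (lam (t-1)) i * A.mulVec (v t) i = - gInf ℓ A (lam (t-1)))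

/-- The quantity `Υ_ν(γ)`. -/
def Upsilon (ν γ : ℝ) : ℝ :=
  ((2/ν) * Real.log 2 - (2/ν) * Real.log ((1+γ) ^ (1-ν) + (1-γ) ^ (1-ν))
      - Real.log (1-γ^2)) /
    (Real.log (1+γ) - Real.log (1-γ))

/-!
The potential `‖∇L(Aλ)‖₁ · exp (θ‖λ‖₁)` dominates the fraction of examples whose margin is below
`θ` (Markov's inequality), so it suffices to show that each AdaBoost step shrinks it by a fixed
factor.

Write the edge as `γ_t = tanh x_t`, so that the step is `α_t = ν x_t`. By convexity of `exp` the
step multiplies `‖∇L‖₁` by at most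
`cosh (ν x_t) - tanh x_t · sinh (ν x_t) = cosh ((1 - ν) x_t) / cosh x_t`,
which Jensen's inequality bounds by `(cosh x_t)^(-ν)`; meanwhile `‖λ‖₁` grows by at most `ν x_t`.
Hence the potential shrinks by `exp (-ν (log (cosh x_t) - θ x_t))`. Duality gives `γ ≤ γ_t`, and
the convex function `log ∘ cosh` has derivative `tanh ≥ θ` to the right of `artanh γ`, so the rate
is smallest at `x_t = artanh γ`. There it is at least quadratic in `γ`, because
`log (cosh x) ≥ (tanh x)² / 2` and `x - log (cosh x) ≤ tanh x`.
-/

section HyperbolicEstimates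

lemma cosh_mul_le_cosh_rpow {s : ℝ} (hs0 : 0 ≤ s) (hs1 : s ≤ 1) (x : ℝ) :
    cosh (s * x) ≤ cosh x ^ s := by
  have jensen := (concaveOn_rpow hs0 hs1).2 (Set.mem_Ici.2 (exp_pos x).le)
    (Set.mem_Ici.2 (exp_pos (-x)).le) (by norm_num : (0 : ℝ) ≤ 1 / 2)
    (by norm_num : (0 : ℝ) ≤ 1 / 2) (by norm_num)
  simp only [smul_eq_mul, ← exp_mul] at jensen
  calc cosh (s * x) = 1 / 2 * exp (x * s) + 1 / 2 * exp (-x * s) := by rw [cosh_eq]; ring_nf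
    _ ≤ (1 / 2 * exp x + 1 / 2 * exp (-x)) ^ s := jensen
    _ = cosh x ^ s := by rw [cosh_eq]; ring_nf

lemma cosh_sub_tanh_mul_sinh_le_exp {ν : ℝ} (hν0 : 0 ≤ ν) (hν1 : ν ≤ 1) (x : ℝ) :
    cosh (ν * x) - tanh x * sinh (ν * x) ≤ exp (-(ν * log (cosh x))) := by
  have hc := cosh_pos x
  calc cosh (ν * x) - tanh x * sinh (ν * x) = cosh ((1 - ν) * x) / cosh x := by
        rw [show (1 - ν) * x = x - ν * x by ring, cosh_sub, tanh_eq_sinh_div_cosh]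
        field_simp
    _ ≤ cosh x ^ (1 - ν) / cosh x := by
        gcongr
        exact cosh_mul_le_cosh_rpow (by linarith) (by linarith) x
    _ = cosh x ^ (-ν) := by rw [← rpow_sub_one hc.ne']; ring_nf
    _ = exp (-(ν * log (cosh x))) := by rw [rpow_def_of_pos hc]; ring_nf

lemma log_cosh_add_tanh_mul_le_log_cosh_add (x d : ℝ) :
    log (cosh x) + tanh x * d ≤ log (cosh (x + d)) := by
  have hc := cosh_pos x
  rw [le_log_iff_exp_le (cosh_pos _), exp_add, exp_log hc]
  calc cosh x * exp (tanh x * d) ≤ cosh x * (cosh d + tanh x * sinh d) := by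
        gcongr
        exact exp_mul_le_cosh_add_mul_sinh (abs_tanh_lt_one x).le d
    _ = cosh (x + d) := by
        rw [cosh_add, tanh_eq_sinh_div_cosh]
        field_simp

lemma sq_tanh_div_two_le_log_cosh (x : ℝ) : tanh x ^ 2 / 2 ≤ log (cosh x) := by
  have hc := cosh_pos x
  have h_inv : 1 - tanh x ^ 2 = (cosh x ^ 2)⁻¹ := by
    rw [tanh_eq_sinh_div_cosh]
    field_simp
    linarith [cosh_sq x]
  have h_log := log_le_sub_one_of_pos (inv_pos.2 (pow_pos hc 2))
  rw [log_inv, log_pow, Nat.cast_ofNat, ← h_inv] at h_log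
  linarith

lemma sub_log_cosh_le_tanh (x : ℝ) : x - log (cosh x) ≤ tanh x := by
  have hc := cosh_pos x
  have h_exp : exp x / cosh x = 1 + tanh x := by
    rw [← cosh_add_sinh, tanh_eq_sinh_div_cosh]
    field_simp
  have h_log := log_le_sub_one_of_pos (div_pos (exp_pos x) hc)
  rw [log_div (exp_pos x).ne' hc.ne', log_exp, h_exp] at h_log
  linarith

/-- The rate `log (cosh x) - θ x` at which a full step (`ν = 1`) with edge `tanh x` decreases the
logarithm of the potential at target margin `θ`. Parametrising by `x` instead of the edge turns the
AdaBoost step into `ν x`. -/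
def decayRate (θ x : ℝ) : ℝ := log (cosh x) - θ * x

lemma decayRate_mono_of_le_tanh {θ x y : ℝ} (hθ : θ ≤ tanh x) (hxy : x ≤ y) :
    decayRate θ x ≤ decayRate θ y := by
  have tangent := log_cosh_add_tanh_mul_le_log_cosh_add x (y - x)
  rw [add_sub_cancel] at tangent
  have slope := mul_le_mul_of_nonneg_right hθ (sub_nonneg.2 hxy)
  unfold decayRate
  linarith

lemma quadratic_tanh_le_decayRate {θ : ℝ} (hθ0 : 0 ≤ θ) (hθ1 : θ ≤ 1) (x : ℝ) :
    (tanh x ^ 2 - θ * tanh x * (2 + tanh x)) / 2 ≤ decayRate θ x := by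
  have h₁ := mul_le_mul_of_nonneg_left (sq_tanh_div_two_le_log_cosh x) (sub_nonneg.2 hθ1)
  have h₂ := mul_le_mul_of_nonneg_left (sub_log_cosh_le_tanh x) hθ0
  unfold decayRate
  linarith

end HyperbolicEstimates

section Edge

lemma abs_mulVec_le_sum_abs {ι κ : Type*} [Fintype κ] {A : Matrix ι κ ℝ}
    (hA : ∀ i j, |A i j| ≤ 1) (w : κ → ℝ) (i : ι) : |A.mulVec w i| ≤ ∑ j, |w j| :=
  calc |∑ j, A i j * w j| ≤ ∑ j, |A i j * w j| := abs_sum_le_sum_abs _ _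
    _ ≤ ∑ j, |w j| := sum_le_sum fun j _ => by
        rw [abs_mul]
        exact mul_le_of_le_one_left (abs_nonneg _) (hA i j)

variable {A : Matrix (Fin m) (Fin n) ℝ}

lemma neZero_of_gammaMax_pos (hγ : 0 < gammaMax A) : NeZero m := by
  refine ⟨?_⟩
  rintro rfl
  refine hγ.not_ge (Real.sSup_nonpos ?_)
  rintro _ ⟨_, _, rfl⟩
  simp

lemma exists_neg_mulVec_lt_one [NeZero m] (hA : ∀ i j, |A i j| ≤ 1) (hγ : gammaMax A < 1)
    {w : Fin n → ℝ} (hw : ∑ j, |w j| = 1) : ∃ i, -A.mulVec w i < 1 := by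
  refine exists_lt_of_ciInf_lt (hγ.trans_le' (le_csSup ⟨1, ?_⟩ ⟨w, hw, rfl⟩))
  rintro _ ⟨μ, hμ, rfl⟩
  calc ⨅ i, -A.mulVec μ i ≤ -A.mulVec μ 0 := ciInf_le (Set.finite_range _).bddBelow 0
    _ ≤ |A.mulVec μ 0| := neg_le_abs _
    _ ≤ 1 := hμ ▸ abs_mulVec_le_sum_abs hA μ 0

variable {ℓ : ℝ → ℝ} {l w : Fin n → ℝ}

lemma abs_sum_gradL_mul_mulVec_le (ℓ : ℝ → ℝ) (A : Matrix (Fin m) (Fin n) ℝ) (l w : Fin n → ℝ) :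
    |∑ i, gradL ℓ A l i * A.mulVec w i| ≤ gInf ℓ A l * ∑ j, |w j| :=
  calc |∑ i, gradL ℓ A l i * A.mulVec w i|
      = |∑ j, (∑ i, gradL ℓ A l i * A i j) * w j| :=
        congrArg abs (Matrix.dotProduct_mulVec (gradL ℓ A l) A w)
    _ ≤ ∑ j, |∑ i, gradL ℓ A l i * A i j| * |w j| := by
        simpa only [abs_mul] using
          abs_sum_le_sum_abs (fun j => (∑ i, gradL ℓ A l i * A i j) * w j) univ
    _ ≤ gInf ℓ A l * ∑ j, |w j| := by
        rw [mul_sum]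
        gcongr with j
        exact le_ciSup (f := fun j => |∑ i, gradL ℓ A l i * A i j|) (Set.finite_range _).bddAbove j

lemma gammaHat_nonneg (ℓ : ℝ → ℝ) (A : Matrix (Fin m) (Fin n) ℝ) (l : Fin n → ℝ) :
    0 ≤ gammaHat ℓ A l :=
  div_nonneg (Real.iSup_nonneg fun _ => abs_nonneg _) (sum_nonneg fun _ _ => abs_nonneg _)

/-- `w` is a steepest descent direction for the empirical risk in `ℓ¹` geometry: an `ℓ¹`-unit vector
along which the slope attains `-‖Aᵀ∇L‖_∞`. Of the signed basis vectors used in boosting only these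
two properties matter. -/
def IsSteepestDescent (ℓ : ℝ → ℝ) (A : Matrix (Fin m) (Fin n) ℝ) (l w : Fin n → ℝ) : Prop :=
  ∑ j, |w j| = 1 ∧ ∑ i, gradL ℓ A l i * A.mulVec w i = -gInf ℓ A l

variable [NeZero m]

lemma gradL_pos (hℓ : ∀ x, 0 < deriv ℓ x) (A : Matrix (Fin m) (Fin n) ℝ) (l : Fin n → ℝ)
    (i : Fin m) : 0 < gradL ℓ A l i :=
  div_pos (hℓ _) (Nat.cast_pos.2 (NeZero.pos m))

lemma gOne_eq_sum_gradL (hℓ : ∀ x, 0 < deriv ℓ x) (A : Matrix (Fin m) (Fin n) ℝ)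
    (l : Fin n → ℝ) : gOne ℓ A l = ∑ i, gradL ℓ A l i :=
  sum_congr rfl fun i _ => abs_of_pos (gradL_pos hℓ A l i)

lemma gOne_pos (hℓ : ∀ x, 0 < deriv ℓ x) (A : Matrix (Fin m) (Fin n) ℝ) (l : Fin n → ℝ) :
    0 < gOne ℓ A l := by
  rw [gOne_eq_sum_gradL hℓ]
  exact sum_pos (fun i _ => gradL_pos hℓ A l i) univ_nonempty

lemma gammaMax_le_gammaHat (hℓ : ∀ x, 0 < deriv ℓ x) (A : Matrix (Fin m) (Fin n) ℝ)
    (l : Fin n → ℝ) : gammaMax A ≤ gammaHat ℓ A l := by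
  refine Real.sSup_le ?_ (gammaHat_nonneg ℓ A l)
  rintro _ ⟨w, hw, rfl⟩
  rw [gammaHat, le_div_iff₀ (gOne_pos hℓ A l), gOne_eq_sum_gradL hℓ, mul_sum]
  calc ∑ i, (⨅ k, -A.mulVec w k) * gradL ℓ A l i
      ≤ ∑ i, -A.mulVec w i * gradL ℓ A l i := by
        gcongr with i
        · exact (gradL_pos hℓ A l i).le
        · exact ciInf_le (Set.finite_range fun k => -A.mulVec w k).bddBelow i
    _ = -∑ i, gradL ℓ A l i * A.mulVec w i := by
        simp only [mul_comm (gradL ℓ A l _), neg_mul, sum_neg_distrib]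
    _ ≤ gInf ℓ A l * ∑ j, |w j| :=
        (neg_le_abs _).trans (abs_sum_gradL_mul_mulVec_le ℓ A l w)
    _ = gInf ℓ A l := by rw [hw, mul_one]

lemma IsSteepestDescent.gammaHat_lt_one (hℓ : ∀ x, 0 < deriv ℓ x) (hA : ∀ i j, |A i j| ≤ 1)
    (hγ : gammaMax A < 1) (hw : IsSteepestDescent ℓ A l w) : gammaHat ℓ A l < 1 := by
  obtain ⟨hw_norm, hw_slope⟩ := hw
  obtain ⟨k, hk⟩ := exists_neg_mulVec_lt_one hA hγ hw_norm
  have hle (i : Fin m) : -A.mulVec w i ≤ 1 :=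
    (neg_le_abs _).trans (hw_norm ▸ abs_mulVec_le_sum_abs hA w i)
  rw [gammaHat, div_lt_one (gOne_pos hℓ A l), gOne_eq_sum_gradL hℓ]
  calc gInf ℓ A l = ∑ i, gradL ℓ A l i * -A.mulVec w i := by
        simp only [mul_neg, sum_neg_distrib, hw_slope, neg_neg]
    _ < ∑ i, gradL ℓ A l i :=
        sum_lt_sum (fun i _ => mul_le_of_le_one_right (gradL_pos hℓ A l i).le (hle i))
          ⟨k, mem_univ k, mul_lt_of_lt_one_right (gradL_pos hℓ A l k) hk⟩

end Edge

section Potential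

variable {A : Matrix (Fin m) (Fin n) ℝ} {l w : Fin n → ℝ} {θ ν : ℝ}

lemma deriv_exp_pos (x : ℝ) : 0 < deriv exp x := by
  rw [Real.deriv_exp]
  exact exp_pos x

lemma IsSteepestDescent.gOne_add_smul_le [NeZero m] (hA : ∀ i j, |A i j| ≤ 1)
    (hw : IsSteepestDescent exp A l w) (a : ℝ) :
    gOne exp A (l + a • w) ≤ gOne exp A l * (cosh a - gammaHat exp A l * sinh a) := by
  obtain ⟨hw_norm, hw_slope⟩ := hw
  have hgrad (i : Fin m) :
      gradL exp A (l + a • w) i = gradL exp A l i * exp (A.mulVec w i * a) := by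
    simp only [gradL, Real.deriv_exp, Matrix.mulVec_add, Matrix.mulVec_smul, Pi.add_apply,
      Pi.smul_apply, smul_eq_mul, exp_add]
    ring_nf
  calc gOne exp A (l + a • w)
      = ∑ i, gradL exp A l i * exp (A.mulVec w i * a) := by
        rw [gOne_eq_sum_gradL deriv_exp_pos]
        exact sum_congr rfl fun i _ => hgrad i
    _ ≤ ∑ i, gradL exp A l i * (cosh a + A.mulVec w i * sinh a) := by
        gcongr with i
        · exact (gradL_pos deriv_exp_pos A l i).le
        · exact exp_mul_le_cosh_add_mul_sinh (hw_norm ▸ abs_mulVec_le_sum_abs hA w i) a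
    _ = (∑ i, gradL exp A l i) * cosh a + (∑ i, gradL exp A l i * A.mulVec w i) * sinh a := by
        simp only [mul_add, sum_add_distrib, sum_mul, mul_assoc]
    _ = gOne exp A l * (cosh a - gammaHat exp A l * sinh a) := by
        have hne := (gOne_pos deriv_exp_pos A l).ne'
        rw [hw_slope, ← gOne_eq_sum_gradL deriv_exp_pos, gammaHat]
        field_simp
        ring

/-- The potential `‖∇L(Aλ)‖₁ · exp (θ‖λ‖₁)` of the exponential loss, which dominates the fraction of
examples whose margin is below `θ`. -/
def marginPotential (A : Matrix (Fin m) (Fin n) ℝ) (θ : ℝ) (l : Fin n → ℝ) : ℝ :=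
  gOne exp A l * exp (θ * ∑ j, |l j|)

lemma marginPotential_zero [NeZero m] (A : Matrix (Fin m) (Fin n) ℝ) (θ : ℝ) :
    marginPotential A θ 0 = 1 := by
  simp [marginPotential, gOne, gradL]

lemma marginPotential_nonneg (A : Matrix (Fin m) (Fin n) ℝ) (θ : ℝ) (l : Fin n → ℝ) :
    0 ≤ marginPotential A θ l :=
  mul_nonneg (sum_nonneg fun _ _ => abs_nonneg _) (exp_pos _).le

lemma sum_abs_add_smul_le {a : ℝ} (ha : 0 ≤ a) (hw : ∑ j, |w j| = 1) :
    ∑ j, |(l + a • w) j| ≤ ∑ j, |l j| + a :=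
  calc ∑ j, |l j + a * w j| ≤ ∑ j, (|l j| + a * |w j|) := by
        gcongr with j
        simpa only [abs_mul, abs_of_nonneg ha] using abs_add_le (l j) (a * w j)
    _ = ∑ j, |l j| + a := by rw [sum_add_distrib, ← mul_sum, hw, mul_one]

lemma IsSteepestDescent.marginPotential_add_smul_le [NeZero m] (hA : ∀ i j, |A i j| ≤ 1)
    (hγ : gammaMax A < 1) (hν0 : 0 ≤ ν) (hν1 : ν ≤ 1) (hθ0 : 0 ≤ θ) (hθγ : θ ≤ gammaMax A)
    (hw : IsSteepestDescent exp A l w) :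
    marginPotential A θ (l + (ν * artanh (gammaHat exp A l)) • w) ≤
      marginPotential A θ l * exp (-(ν * decayRate θ (artanh (gammaMax A)))) := by
  have hedge := gammaMax_le_gammaHat deriv_exp_pos A l
  have hlt := hw.gammaHat_lt_one deriv_exp_pos hA hγ
  have hG := gOne_pos deriv_exp_pos A l
  set x := artanh (gammaHat exp A l)
  have htanh : tanh x = gammaHat exp A l := tanh_artanh ⟨by linarith, hlt⟩
  have ha : 0 ≤ ν * x := mul_nonneg hν0 (artanh_nonneg (gammaHat_nonneg exp A l))
  have hgrad : gOne exp A (l + (ν * x) • w) ≤ gOne exp A l * exp (-(ν * log (cosh x))) := by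
    refine (hw.gOne_add_smul_le hA _).trans ?_
    rw [← htanh]
    gcongr
    exact cosh_sub_tanh_mul_sinh_le_exp hν0 hν1 x
  have hrate : decayRate θ (artanh (gammaMax A)) ≤ decayRate θ x :=
    decayRate_mono_of_le_tanh (by rwa [tanh_artanh ⟨by linarith, hγ⟩])
      (artanh_le_artanh (by linarith) hlt hedge)
  calc marginPotential A θ (l + (ν * x) • w)
      ≤ gOne exp A l * exp (-(ν * log (cosh x))) * exp (θ * (∑ j, |l j| + ν * x)) := by
        unfold marginPotential
        gcongr
        exact sum_abs_add_smul_le ha hw.1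
    _ = marginPotential A θ l * exp (-(ν * decayRate θ x)) := by
        simp only [marginPotential, decayRate, mul_assoc, ← exp_add]
        ring_nf
    _ ≤ marginPotential A θ l * exp (-(ν * decayRate θ (artanh (gammaMax A)))) := by
        gcongr
        exact marginPotential_nonneg A θ l

end Potential

section MarginDistribution

variable {A : Matrix (Fin m) (Fin n) ℝ} {l : Fin n → ℝ} {θ : ℝ}

/-- The fraction of examples whose normalised margin is below `θ`. For `l = 0` the division by zero
makes every margin `0`. -/
def lowMarginFraction (A : Matrix (Fin m) (Fin n) ℝ) (θ : ℝ) (l : Fin n → ℝ) : ℝ :=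
  ((Finset.univ.filter (fun i : Fin m =>
    (-(A.mulVec l i)) / (∑ j, |l j|) < θ)).card : ℝ) / m

lemma lowMarginFraction_le_one (A : Matrix (Fin m) (Fin n) ℝ) (θ : ℝ) (l : Fin n → ℝ) :
    lowMarginFraction A θ l ≤ 1 := by
  refine div_le_one_of_le₀ ?_ (Nat.cast_nonneg m)
  exact_mod_cast (card_filter_le _ _).trans_eq (card_fin m)

lemma lowMarginFraction_le_marginPotential [NeZero m] (hl : l ≠ 0) :
    lowMarginFraction A θ l ≤ marginPotential A θ l := by
  obtain ⟨j, hj⟩ := Function.ne_iff.1 hl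
  have hnorm : 0 < ∑ j, |l j| :=
    sum_pos' (fun _ _ => abs_nonneg _) ⟨j, mem_univ j, abs_pos.2 hj⟩
  rw [lowMarginFraction, marginPotential, gOne_eq_sum_gradL deriv_exp_pos, sum_mul,
    card_filter, Nat.cast_sum, sum_div]
  gcongr with i
  split_ifs with hi
  · have hone : 1 ≤ exp (A.mulVec l i + θ * ∑ j, |l j|) :=
      one_le_exp (by linarith [(div_lt_iff₀ hnorm).1 hi])
    rw [gradL, Real.deriv_exp, div_mul_eq_mul_div, ← exp_add, Nat.cast_one]
    gcongr
  · rw [Nat.cast_zero, zero_div]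
    exact (mul_pos (gradL_pos deriv_exp_pos A l i) (exp_pos _)).le

lemma le_margin_of_lowMarginFraction_lt [NeZero m] (h : lowMarginFraction A θ l < 1 / m) :
    θ ≤ margin A l := by
  have hm : (0 : ℝ) < m := Nat.cast_pos.2 (NeZero.pos m)
  have hcard := (div_lt_div_iff_of_pos_right hm).1 h
  rw [Nat.cast_lt_one, card_eq_zero, filter_eq_empty_iff] at hcard
  exact le_ciInf fun i => not_lt.1 (hcard (mem_univ i))

end MarginDistribution

section Boosting

variable {A : Matrix (Fin m) (Fin n) ℝ} {lam : ℕ → Fin n → ℝ} {α : ℕ → ℝ} {v : ℕ → Fin n → ℝ}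
  {ν θ : ℝ}

lemma IsBoostSeq.isSteepestDescent {ℓ : ℝ → ℝ} (hseq : IsBoostSeq ℓ A lam α v) (t : ℕ) :
    IsSteepestDescent ℓ A (lam t) (v (t + 1)) := by
  obtain ⟨-, -, hbasis, hslope⟩ := hseq
  refine ⟨?_, hslope (t + 1) t.succ_pos⟩
  obtain ⟨s, hs, j, hv⟩ := hbasis (t + 1) t.succ_pos
  have hs_abs : |s| = 1 := by rcases hs with rfl | rfl <;> simp
  simp [hv, hs_abs, Pi.single_apply, apply_ite abs]

lemma IsBoostSeq.marginPotential_le [NeZero m] (hA : ∀ i j, |A i j| ≤ 1) (hγ : gammaMax A < 1)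
    (hν0 : 0 ≤ ν) (hν1 : ν ≤ 1) (hseq : IsBoostSeq exp A lam α v)
    (hstep : ∀ i : ℕ, 1 ≤ i → α i = (ν / 2) * log
      ((1 + gammaHat exp A (lam (i - 1))) / (1 - gammaHat exp A (lam (i - 1)))))
    (hθ0 : 0 ≤ θ) (hθγ : θ ≤ gammaMax A) (t : ℕ) :
    marginPotential A θ (lam t) ≤ exp (-(t * (ν * decayRate θ (artanh (gammaMax A))))) := by
  induction t with
  | zero => simp [hseq.1, marginPotential_zero]
  | succ t ih =>
    have hdir := hseq.isSteepestDescent t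
    have hα : α (t + 1) = ν * artanh (gammaHat exp A (lam t)) := by
      rw [hstep (t + 1) t.succ_pos, Nat.add_sub_cancel, artanh_eq_half_log
        ⟨by linarith [gammaHat_nonneg exp A (lam t)],
          (hdir.gammaHat_lt_one deriv_exp_pos hA hγ).le⟩]
      ring
    have hlam : lam (t + 1) = lam t + (ν * artanh (gammaHat exp A (lam t))) • v (t + 1) := by
      rw [hseq.2.1 (t + 1) t.succ_pos, Nat.add_sub_cancel, hα]
    calc marginPotential A θ (lam (t + 1))
        ≤ marginPotential A θ (lam t) * exp (-(ν * decayRate θ (artanh (gammaMax A)))) :=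
          hlam ▸ hdir.marginPotential_add_smul_le hA hγ hν0 hν1 hθ0 hθγ
      _ ≤ exp (-(t * (ν * decayRate θ (artanh (gammaMax A))))) *
            exp (-(ν * decayRate θ (artanh (gammaMax A)))) := by gcongr
      _ = exp (-((t + 1 : ℕ) * (ν * decayRate θ (artanh (gammaMax A))))) := by
          rw [← exp_add]
          push_cast
          ring_nf

lemma IsBoostSeq.lowMarginFraction_le [NeZero m] (hA : ∀ i j, |A i j| ≤ 1)
    (hγ0 : 0 ≤ gammaMax A) (hγ1 : gammaMax A < 1) (hν0 : 0 ≤ ν) (hν1 : ν ≤ 1)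
    (hseq : IsBoostSeq exp A lam α v)
    (hstep : ∀ i : ℕ, 1 ≤ i → α i = (ν / 2) * log
      ((1 + gammaHat exp A (lam (i - 1))) / (1 - gammaHat exp A (lam (i - 1)))))
    (hθ0 : 0 ≤ θ) {t : ℕ} (ht : lam t ≠ 0) :
    lowMarginFraction A θ (lam t) ≤
      exp (-(t : ℝ) * ν * (gammaMax A ^ 2 - θ * gammaMax A * (2 + gammaMax A)) / 2) := by
  rcases le_total θ (gammaMax A) with hθγ | hγθ
  · refine (lowMarginFraction_le_marginPotential ht).trans <|
      (hseq.marginPotential_le hA hγ1 hν0 hν1 hstep hθ0 hθγ t).trans (exp_le_exp.2 ?_)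
    have hrate := quadratic_tanh_le_decayRate hθ0 (hθγ.trans hγ1.le) (artanh (gammaMax A))
    rw [tanh_artanh ⟨by linarith, hγ1⟩] at hrate
    have := mul_le_mul_of_nonneg_left hrate (mul_nonneg t.cast_nonneg hν0)
    linarith
  · refine (lowMarginFraction_le_one A θ (lam t)).trans (one_le_exp ?_)
    have hrate : 0 ≤ θ * gammaMax A * (2 + gammaMax A) - gammaMax A ^ 2 := by
      linarith [mul_nonneg hγ0 (sub_nonneg.2 hγθ), mul_nonneg hθ0 hγ0,
        mul_nonneg hθ0 (sq_nonneg (gammaMax A))]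
    have := mul_nonneg (mul_nonneg t.cast_nonneg hν0) hrate
    linarith

end Boosting

theorem margin_rate_ada_general {m n : ℕ} (A : Matrix (Fin m) (Fin n) ℝ)
    (hA : ∀ i j, |A i j| ≤ 1) (ν : ℝ) (hν : ν ∈ Set.Ioc (0 : ℝ) 1)
    (hγ : gammaMax A ∈ Set.Ioo (0 : ℝ) 1)
    (lam : ℕ → Fin n → ℝ) (α : ℕ → ℝ) (v : ℕ → Fin n → ℝ)
    (hseq : IsBoostSeq exp A lam α v)
    (hstep : ∀ i : ℕ, 1 ≤ i → α i = (ν / 2) * log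
      ((1 + gammaHat exp A (lam (i - 1))) / (1 - gammaHat exp A (lam (i - 1)))))
    (θ : ℝ) (hθ0 : 0 ≤ θ) :
    (∀ t : ℕ, lam t ≠ 0 → lowMarginFraction A θ (lam t) ≤
      exp (-(t : ℝ) * ν * (gammaMax A ^ 2 - θ * gammaMax A * (2 + gammaMax A)) / 2)) ∧
    (θ < gammaMax A / (2 + gammaMax A) → ∀ t : ℕ, lam t ≠ 0 →
      2 * log m / (ν * (gammaMax A ^ 2 - θ * gammaMax A * (2 + gammaMax A))) < (t : ℝ) →
      θ ≤ margin A (lam t)) := by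
  have := neZero_of_gammaMax_pos hγ.1
  have hfraction (t : ℕ) (hne : lam t ≠ 0) :=
    hseq.lowMarginFraction_le hA hγ.1.le hγ.2 hν.1.le hν.2 hstep hθ0 hne
  refine ⟨hfraction, fun hθ t hne ht => ?_⟩
  have hc : 0 < gammaMax A ^ 2 - θ * gammaMax A * (2 + gammaMax A) := by
    rw [lt_div_iff₀ (by linarith [hγ.1])] at hθ
    linarith [mul_lt_mul_of_pos_right hθ hγ.1]
  have hm : (0 : ℝ) < m := Nat.cast_pos.2 (NeZero.pos m)
  refine le_margin_of_lowMarginFraction_lt ((hfraction t hne).trans_lt ?_)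
  rw [one_div, ← exp_log (inv_pos.2 hm), log_inv, exp_lt_exp]
  linarith [(div_lt_iff₀ (mul_pos hν.1 hc)).1 ht]

/-- margin-distribution rate for AdaBoost steps with the exponential
loss, for target margins `θ < γ/(1+γ)`; consequently `M(Aλ_t) ≥ θ` for
`θ < γ/(2+γ)` and `t` large enough. -/
theorem margin_rate_ada {m n : ℕ} (hm : 0 < m) (hn : 0 < n)
    (A : Matrix (Fin m) (Fin n) ℝ) (hA : ∀ i j, |A i j| ≤ 1)
    (ν : ℝ) (hν : ν ∈ Set.Ioc (0:ℝ) 1)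
    (hγ : gammaMax A ∈ Set.Ioo (0:ℝ) 1)
    (lam : ℕ → Fin n → ℝ) (α : ℕ → ℝ) (v : ℕ → Fin n → ℝ)
    (hseq : IsBoostSeq Real.exp A lam α v)
    (hstep : ∀ i : ℕ, 1 ≤ i → α i = (ν/2) * Real.log
      ((1 + gammaHat Real.exp A (lam (i-1))) / (1 - gammaHat Real.exp A (lam (i-1)))))
    (θ : ℝ) (hθ0 : 0 ≤ θ) (hθ : θ < gammaMax A / (1 + gammaMax A)) :
    (∀ t : ℕ, 1 ≤ t → lam t ≠ 0 →
      ((Finset.univ.filter (fun i : Fin m =>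
          (-(A.mulVec (lam t) i)) / (∑ j, |lam t j|) < θ)).card : ℝ) / m ≤
        Real.exp (-(t:ℝ) * ν * ((gammaMax A)^2 - θ * gammaMax A * (2 + gammaMax A)) / 2)) ∧
    (θ < gammaMax A / (2 + gammaMax A) →
      ∀ t : ℕ, 1 ≤ t → lam t ≠ 0 →
      2 * Real.log m / (ν * ((gammaMax A)^2 - θ * gammaMax A * (2 + gammaMax A))) < (t:ℝ) →
      margin A (lam t) ≥ θ) := by
  obtain ⟨hfraction, hmargin⟩ := margin_rate_ada_general A hA ν hν hγ lam α v hseq hstep θ hθ0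
  exact ⟨fun t _ => hfraction t, fun hθ t _ => hmargin hθ t⟩
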